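/- arXiv:math/0509348 — 5 statements merged into one kernel-verified Lean document; each statement's English description precedes it below -/
import Mathlib

section
/- Let V and W be finite-dimensional complex inner product spaces and let B₁, B₂ ∈ End(V), i ∈ Hom(W,V), j ∈ Hom(V,W) satisfy the second ADHM equation [B₁,B₁†] + [B₂,B₂†] + i∘i† − j†∘j = 0, where † denotes the adjoint. Then for every (z₁,z₂) ∈ ℂ², one has β(z₁,z₂)∘β(z₁,z₂)† = α(z₁,z₂)†∘α(z₁,z₂) as endomorphisms of V. -/
open LinearMap

variable {V W : Type*} [NormedAddCommGroup V] [InnerProductSpace ℂ V] [FiniteDimensional ℂ V]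
  [NormedAddCommGroup W] [InnerProductSpace ℂ W] [FiniteDimensional ℂ W]

/-- `V ⊕ V ⊕ W` with its Hilbert (orthogonal direct sum) inner product structure. -/
abbrev adhmTotal (V W : Type*) [NormedAddCommGroup V] [InnerProductSpace ℂ V]
    [NormedAddCommGroup W] [InnerProductSpace ℂ W] : Type _ :=
  WithLp 2 (V × WithLp 2 (V × W))

noncomputable instance : FiniteDimensional ℂ (adhmTotal V W) :=
  Module.Finite.equiv (WithLp.linearEquiv 2 ℂ (V × WithLp 2 (V × W))).symm

/-- The ADHM map `α(z₁,z₂) : V → V ⊕ V ⊕ W`, `v ↦ ((B₁+z₁·1)v, (B₂+z₂·1)v, j v)`. -/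
noncomputable def adhmAlpha (B₁ B₂ : V →ₗ[ℂ] V) (j : V →ₗ[ℂ] W) (z₁ z₂ : ℂ) :
    V →ₗ[ℂ] adhmTotal V W :=
  (WithLp.linearEquiv 2 ℂ (V × WithLp 2 (V × W))).symm.toLinearMap ∘ₗ
    ((B₁ + z₁ • LinearMap.id).prod
      ((WithLp.linearEquiv 2 ℂ (V × W)).symm.toLinearMap ∘ₗ
        (B₂ + z₂ • LinearMap.id).prod j))

/-- The ADHM map `β(z₁,z₂) : V ⊕ V ⊕ W → V`, `(v₁,v₂,w) ↦ −(B₂+z₂·1)v₁ + (B₁+z₁·1)v₂ + i w`. -/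
noncomputable def adhmBeta (B₁ B₂ : V →ₗ[ℂ] V) (i : W →ₗ[ℂ] V) (z₁ z₂ : ℂ) :
    adhmTotal V W →ₗ[ℂ] V :=
  ((-(B₂ + z₂ • LinearMap.id)) ∘ₗ LinearMap.fst ℂ V (V × W)
    + (B₁ + z₁ • LinearMap.id) ∘ₗ ((LinearMap.fst ℂ V W) ∘ₗ (LinearMap.snd ℂ V (V × W)))
    + i ∘ₗ ((LinearMap.snd ℂ V W) ∘ₗ (LinearMap.snd ℂ V (V × W)))) ∘ₗ
    ((LinearMap.id : V →ₗ[ℂ] V).prodMap (WithLp.linearEquiv 2 ℂ (V × W)).toLinearMap) ∘ₗ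
    (WithLp.linearEquiv 2 ℂ (V × WithLp 2 (V × W))).toLinearMap

theorem adhmBeta_adjoint_apply (B₁ B₂ : V →ₗ[ℂ] V) (i : W →ₗ[ℂ] V) (z₁ z₂ : ℂ) (v : V) :
    adjoint (adhmBeta B₁ B₂ i z₁ z₂) v =
      WithLp.toLp 2 (-(adjoint B₂ v + (starRingEnd ℂ z₂) • v),
        WithLp.toLp 2 (adjoint B₁ v + (starRingEnd ℂ z₁) • v, adjoint i v)) := by
  refine ext_inner_right ℂ fun x => ?_
  rw [LinearMap.adjoint_inner_left]
  simp [adhmBeta, WithLp.prod_inner_apply, inner_add_left, inner_add_right, inner_neg_left,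
    inner_neg_right, inner_smul_left, inner_smul_right, LinearMap.adjoint_inner_left]
  ring

theorem adhmAlpha_adjoint_apply (B₁ B₂ : V →ₗ[ℂ] V) (j : V →ₗ[ℂ] W) (z₁ z₂ : ℂ)
    (x y : V) (w : W) :
    adjoint (adhmAlpha B₁ B₂ j z₁ z₂) (WithLp.toLp 2 (x, WithLp.toLp 2 (y, w))) =
      adjoint B₁ x + (starRingEnd ℂ z₁) • x + (adjoint B₂ y + (starRingEnd ℂ z₂) • y)
        + adjoint j w := by
  refine ext_inner_right ℂ fun u => ?_
  rw [LinearMap.adjoint_inner_left]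
  simp [adhmAlpha, WithLp.prod_inner_apply, inner_add_left, inner_add_right,
    inner_smul_left, inner_smul_right, LinearMap.adjoint_inner_left]
  ring

/-- If the second ADHM equation `[B₁,B₁†] + [B₂,B₂†] + i∘i† − j†∘j = 0` holds, then for every
`(z₁,z₂) ∈ ℂ²` one has `β(z₁,z₂)∘β(z₁,z₂)† = α(z₁,z₂)†∘α(z₁,z₂)` as endomorphisms of `V`. -/
theorem adhm_beta_betaAdjoint_eq_alphaAdjoint_alpha
    (B₁ B₂ : V →ₗ[ℂ] V) (i : W →ₗ[ℂ] V) (j : V →ₗ[ℂ] W)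
    (hADHM2 : (B₁ ∘ₗ adjoint B₁ - adjoint B₁ ∘ₗ B₁)
        + (B₂ ∘ₗ adjoint B₂ - adjoint B₂ ∘ₗ B₂)
        + i ∘ₗ adjoint i - adjoint j ∘ₗ j = 0) :
    ∀ z₁ z₂ : ℂ,
      adhmBeta B₁ B₂ i z₁ z₂ ∘ₗ adjoint (adhmBeta B₁ B₂ i z₁ z₂)
        = adjoint (adhmAlpha B₁ B₂ j z₁ z₂) ∘ₗ adhmAlpha B₁ B₂ j z₁ z₂ := by
  intro z₁ z₂
  ext v
  have h := LinearMap.congr_fun hADHM2 v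
  simp only [LinearMap.add_apply, LinearMap.sub_apply, LinearMap.comp_apply,
    LinearMap.zero_apply] at h
  have ha : adhmAlpha B₁ B₂ j z₁ z₂ v =
      WithLp.toLp 2 (B₁ v + z₁ • v, WithLp.toLp 2 (B₂ v + z₂ • v, j v)) := rfl
  rw [LinearMap.comp_apply, LinearMap.comp_apply, ha, adhmAlpha_adjoint_apply,
    adhmBeta_adjoint_apply, ← sub_eq_zero, ← h]
  simp [adhmBeta]
  module
end

section
/- The basic instanton on ℝ⁴ is anti-self-dual: if A_μ(q) = Im(q · conj(e_μ))/(1 + |q|²) for μ = 1,…,4, then its curvature components F_{μν} = ∂_μA_ν − ∂_νA_μ + [A_μ, A_ν] satisfy, at every point q ∈ ℍ, the anti-self-duality equations F₁₂ = F₃₄, F₁₃ = −F₂₄, F₁₄ = F₂₃. -/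
/-- The standard quaternion basis `e₁ = 1, e₂ = 𝐢, e₃ = 𝐣, e₄ = 𝐤`, identifying `ℝ⁴ ≅ ℍ`. -/
noncomputable def qe : Fin 4 → Quaternion ℝ
  | 0 => 1
  | 1 => ⟨0, 1, 0, 0⟩
  | 2 => ⟨0, 0, 1, 0⟩
  | 3 => ⟨0, 0, 0, 1⟩

/-- The imaginary part `Im p = (p − conj p)/2` of a quaternion. -/
noncomputable def qIm (p : Quaternion ℝ) : Quaternion ℝ := (p - star p) / 2

/-- The components `A_μ(q) = Im(q · conj(e_μ))/(1 + |q|²)` of the basic instanton on `ℝ⁴ ≅ ℍ`. -/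
noncomputable def basicInstanton (μ : Fin 4) (q : Quaternion ℝ) : Quaternion ℝ :=
  (1 + ‖q‖ ^ 2)⁻¹ • qIm (q * star (qe μ))

/-- The curvature components `F_{μν} = ∂_μA_ν − ∂_νA_μ + [A_μ, A_ν]` of a connection on
`ℝ⁴ ≅ ℍ` with imaginary-quaternion (su(2)) values. -/
noncomputable def qCurv (A : Fin 4 → Quaternion ℝ → Quaternion ℝ) (μ ν : Fin 4)
    (q : Quaternion ℝ) : Quaternion ℝ :=
  fderiv ℝ (A ν) q (qe μ) - fderiv ℝ (A μ) q (qe ν) + (A μ q * A ν q - A ν q * A μ q)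

lemma qIm_eq (p : Quaternion ℝ) : qIm p = (2⁻¹ : ℝ) • (p - star p) := by
  unfold qIm
  have h2 : (2 : Quaternion ℝ)⁻¹ = ((2⁻¹ : ℝ) : Quaternion ℝ) := by
    push_cast
    rfl
  rw [div_eq_mul_inv, h2, Quaternion.mul_coe_eq_smul]

lemma qIm_re (p : Quaternion ℝ) : (qIm p).re = 0 := by
  rw [qIm_eq]; simp
lemma qIm_imI (p : Quaternion ℝ) : (qIm p).imI = p.imI := by
  rw [qIm_eq]; simp; ring
lemma qIm_imJ (p : Quaternion ℝ) : (qIm p).imJ = p.imJ := by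
  rw [qIm_eq]; simp; ring
lemma qIm_imK (p : Quaternion ℝ) : (qIm p).imK = p.imK := by
  rw [qIm_eq]; simp; ring

lemma qe_re (μ : Fin 4) : (qe μ).re = if μ = 0 then 1 else 0 := by
  fin_cases μ <;> simp [qe] <;> rfl
lemma qe_imI (μ : Fin 4) : (qe μ).imI = if μ = 1 then 1 else 0 := by
  fin_cases μ <;> simp [qe] <;> rfl
lemma qe_imJ (μ : Fin 4) : (qe μ).imJ = if μ = 2 then 1 else 0 := by
  fin_cases μ <;> simp [qe] <;> rfl
lemma qe_imK (μ : Fin 4) : (qe μ).imK = if μ = 3 then 1 else 0 := by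
  fin_cases μ <;> simp [qe] <;> rfl

lemma hasDeriv_line (ν : Fin 4) (q v : Quaternion ℝ) :
    fderiv ℝ (basicInstanton ν) q v =
      (1 + ‖q‖ ^ 2)⁻¹ • qIm (v * star (qe ν))
        - (2 * inner ℝ q v * ((1 + ‖q‖ ^ 2)⁻¹) ^ 2) • qIm (q * star (qe ν)) := by
  have hpos : (1 + ‖q‖ ^ 2) ≠ 0 := by positivity
  have hlin : ∃ L : Quaternion ℝ →L[ℝ] Quaternion ℝ, ∀ x, L x = qIm (x * star (qe ν)) := by
    refine ⟨LinearMap.toContinuousLinearMap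
      { toFun := fun x => qIm (x * star (qe ν)), map_add' := ?_, map_smul' := ?_ }, fun x => rfl⟩
    · intro x y
      ext <;> simp [qIm_re, qIm_imI, qIm_imJ, qIm_imK] <;> ring
    · intro c x
      ext <;> simp [qIm_re, qIm_imI, qIm_imJ, qIm_imK] <;> ring
  obtain ⟨L, hL⟩ := hlin
  have hn : HasFDerivAt (fun x : Quaternion ℝ => 1 + ‖x‖ ^ 2) (2 • innerSL ℝ q) q :=
    (hasStrictFDerivAt_norm_sq q).hasFDerivAt.const_add 1
  have hi := (hasDerivAt_inv hpos).comp_hasFDerivAt q hn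
  have h := hi.smul (L.hasFDerivAt (x := q))
  have he : basicInstanton ν = fun x => ((fun y : ℝ => y⁻¹) ∘ fun x : Quaternion ℝ => 1 + ‖x‖ ^ 2) x • L x := by
    funext x
    simp [basicInstanton, hL]
  rw [he]
  erw [h.fderiv]
  simp only [← hL]
  simp [sub_eq_add_neg, ← neg_smul]
  congr 1
  ring

theorem basicInstanton_isASD :
    ∀ q : Quaternion ℝ,
      qCurv basicInstanton 0 1 q = qCurv basicInstanton 2 3 q
      ∧ qCurv basicInstanton 0 2 q = -qCurv basicInstanton 1 3 q
      ∧ qCurv basicInstanton 0 3 q = qCurv basicInstanton 1 2 q := by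
  intro q
  have hpos : (1 + ‖q‖ ^ 2) ≠ 0 := by positivity
  have hq : ‖q‖ ^ 2 = q.re ^ 2 + q.imI ^ 2 + q.imJ ^ 2 + q.imK ^ 2 := by
    rw [sq, ← Quaternion.normSq_eq_norm_mul_self, Quaternion.normSq_def']
  simp only [qCurv, hasDeriv_line, basicInstanton, Quaternion.inner_def]
  obtain ⟨s, hs⟩ : ∃ s, s = (1 + ‖q‖ ^ 2)⁻¹ := ⟨_, rfl⟩
  have h1 : s = s ^ 2 * (1 + (q.re ^ 2 + q.imI ^ 2 + q.imJ ^ 2 + q.imK ^ 2)) := by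
    rw [← hq, hs]; field_simp
  rw [← hs]
  clear hs hq hpos
  refine ⟨?_, ?_, ?_⟩ <;> ext <;> simp [qIm_re, qIm_imI, qIm_imJ, qIm_imK, qe_re, qe_imI, qe_imJ, qe_imK] <;> grind
end

section
/- Instantons solve the Yang–Mills equation: let A₁,…,A₄ : ℝ⁴ → u(n) be twice continuously differentiable and anti-self-dual, i.e. the curvature components F_{ij} = ∂ᵢA_j − ∂_jA_i + [A_i, A_j] satisfy F₁₂ = F₃₄, F₁₃ = −F₂₄, F₁₄ = F₂₃ everywhere. Then A satisfies the Yang–Mills equation in coordinates: for each j ∈ {1,2,3,4} and every x ∈ ℝ⁴, Σ_{i=1}^{4} (∂ᵢF_{ij} + [A_i, F_{ij}]) = 0, where F_{ji} = −F_{ij} and F_{ii} = 0. -/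
open Matrix

attribute [local instance] Matrix.frobeniusNormedAddCommGroup Matrix.frobeniusNormedSpace

/-- The standard basis vectors of `ℝ⁴`. -/
noncomputable def e4 (i : Fin 4) : EuclideanSpace ℝ (Fin 4) := EuclideanSpace.single i 1

/-- The curvature components `F_{ij} = ∂ᵢA_j − ∂_jA_i + [A_i, A_j]` of a matrix-valued
connection `A` on `ℝ⁴`. -/
noncomputable def curv {n : ℕ} (A : Fin 4 → EuclideanSpace ℝ (Fin 4) → Matrix (Fin n) (Fin n) ℂ)
    (i j : Fin 4) (x : EuclideanSpace ℝ (Fin 4)) : Matrix (Fin n) (Fin n) ℂ :=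
  fderiv ℝ (A j) x (e4 i) - fderiv ℝ (A i) x (e4 j) + (A i x * A j x - A j x * A i x)

/-- A connection on `ℝ⁴` is anti-self-dual if `F₁₂ = F₃₄`, `F₁₃ = −F₂₄`, `F₁₄ = F₂₃`
at every point. -/
def IsASD {n : ℕ} (A : Fin 4 → EuclideanSpace ℝ (Fin 4) → Matrix (Fin n) (Fin n) ℂ) : Prop :=
  ∀ x, curv A 0 1 x = curv A 2 3 x
    ∧ curv A 0 2 x = -curv A 1 3 x
    ∧ curv A 0 3 x = curv A 1 2 x

/-- Second derivative of component. -/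
noncomputable def d2A {n : ℕ} (A : Fin 4 → EuclideanSpace ℝ (Fin 4) → Matrix (Fin n) (Fin n) ℂ)
    (x : EuclideanSpace ℝ (Fin 4)) (i j k : Fin 4) : Matrix (Fin n) (Fin n) ℂ :=
  fderiv ℝ (fderiv ℝ (A i)) x (e4 k) (e4 j)

theorem d2A_symm {n : ℕ} (A : Fin 4 → EuclideanSpace ℝ (Fin 4) → Matrix (Fin n) (Fin n) ℂ)
    (hA : ∀ μ, ContDiff ℝ 2 (A μ)) (x : EuclideanSpace ℝ (Fin 4)) (i j k : Fin 4) :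
    d2A A x i j k = d2A A x i k j := by
  have h : IsSymmSndFDerivAt ℝ (A i) x :=
    ((hA i).contDiffAt).isSymmSndFDerivAt (by simp)
  exact h (e4 k) (e4 j)

theorem hasFDerivAt_matMul {n : ℕ} {f g : EuclideanSpace ℝ (Fin 4) → Matrix (Fin n) (Fin n) ℂ}
    {x : EuclideanSpace ℝ (Fin 4)}
    (hf : DifferentiableAt ℝ f x) (hg : DifferentiableAt ℝ g x) :
    DifferentiableAt ℝ (fun y => f y * g y) x ∧ ∀ v, fderiv ℝ (fun y => f y * g y) x v
      = f x * fderiv ℝ g x v + fderiv ℝ f x v * g x := by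
  let : NormedRing (Matrix (Fin n) (Fin n) ℂ) := Matrix.frobeniusNormedRing
  let : NormedAlgebra ℝ (Matrix (Fin n) (Fin n) ℂ) := Matrix.frobeniusNormedAlgebra
  have h := HasFDerivAt.mul' hf.hasFDerivAt hg.hasFDerivAt
  refine ⟨h.differentiableAt, fun v => ?_⟩
  have := h.fderiv
  exact congrArg (fun L => L v) this

theorem hasFDerivAt_apply_const {E F G : Type*} [NormedAddCommGroup E] [NormedSpace ℝ E]
    [NormedAddCommGroup F] [NormedSpace ℝ F] [NormedAddCommGroup G] [NormedSpace ℝ G]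
    {f : E → F →L[ℝ] G} {x : E} (hf : DifferentiableAt ℝ f x) (v : F) :
    HasFDerivAt (fun y => f y v) ((fderiv ℝ f x).flip v) x := by
  simpa using hf.hasFDerivAt.clm_apply (hasFDerivAt_const v x)

theorem fderiv_curv {n : ℕ} (A : Fin 4 → EuclideanSpace ℝ (Fin 4) → Matrix (Fin n) (Fin n) ℂ)
    (hA : ∀ μ, ContDiff ℝ 2 (A μ)) (x : EuclideanSpace ℝ (Fin 4)) (i j k : Fin 4) :
    fderiv ℝ (fun y => curv A i j y) x (e4 k) = d2A A x j i k - d2A A x i j k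
      + ((A i x * fderiv ℝ (A j) x (e4 k) + fderiv ℝ (A i) x (e4 k) * A j x)
      - (A j x * fderiv ℝ (A i) x (e4 k) + fderiv ℝ (A j) x (e4 k) * A i x)) := by
  have hd : ∀ i, DifferentiableAt ℝ (A i) x := fun i => (hA i).differentiable (by simp) x
  have hdd : ∀ i, DifferentiableAt ℝ (fderiv ℝ (A i)) x := fun i =>
    ((hA i).fderiv_right (m := 1) (by norm_num)).differentiable (by simp) x
  have h2 : ∀ i j, HasFDerivAt (fun y => fderiv ℝ (A i) y (e4 j))
      ((fderiv ℝ (fderiv ℝ (A i)) x).flip (e4 j)) x := fun i j => hasFDerivAt_apply_const (hdd i) (e4 j)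
  obtain ⟨m1, m1'⟩ := hasFDerivAt_matMul (hd i) (hd j)
  obtain ⟨m2, m2'⟩ := hasFDerivAt_matMul (hd j) (hd i)
  have h := (((h2 j i).sub (h2 i j)).add (m1.hasFDerivAt.sub m2.hasFDerivAt)).fderiv
  have h' := congrArg (fun L => L (e4 k)) h
  refine Eq.trans h' ?_
  rw [← m1', ← m2']
  rfl

theorem bianchi {n : ℕ} (A : Fin 4 → EuclideanSpace ℝ (Fin 4) → Matrix (Fin n) (Fin n) ℂ)
    (hA : ∀ μ, ContDiff ℝ 2 (A μ)) (x : EuclideanSpace ℝ (Fin 4)) (i j k : Fin 4) :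
    (fderiv ℝ (fun y => curv A j k y) x (e4 i) + (A i x * curv A j k x - curv A j k x * A i x))
    + (fderiv ℝ (fun y => curv A k i y) x (e4 j) + (A j x * curv A k i x - curv A k i x * A j x))
    + (fderiv ℝ (fun y => curv A i j y) x (e4 k) + (A k x * curv A i j x - curv A i j x * A k x))
      = 0 := by
  simp only [fderiv_curv A hA]
  rw [d2A_symm A hA x i k j, d2A_symm A hA x j k i, d2A_symm A hA x k j i]
  simp only [curv]
  noncomm_ring

theorem curv_anti {n : ℕ} (A : Fin 4 → EuclideanSpace ℝ (Fin 4) → Matrix (Fin n) (Fin n) ℂ)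
    (i j : Fin 4) : curv A i j = - curv A j i := by
  funext x
  simp only [curv, Pi.neg_apply]
  abel

/-- Covariant derivative. -/
noncomputable def covD {n : ℕ} (A : Fin 4 → EuclideanSpace ℝ (Fin 4) → Matrix (Fin n) (Fin n) ℂ)
    (x : EuclideanSpace ℝ (Fin 4)) (i : Fin 4)
    (f : EuclideanSpace ℝ (Fin 4) → Matrix (Fin n) (Fin n) ℂ) : Matrix (Fin n) (Fin n) ℂ :=
  fderiv ℝ f x (e4 i) + (A i x * f x - f x * A i x)

theorem covD_neg {n : ℕ} (A : Fin 4 → EuclideanSpace ℝ (Fin 4) → Matrix (Fin n) (Fin n) ℂ)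
    (x : EuclideanSpace ℝ (Fin 4)) (i : Fin 4)
    (f : EuclideanSpace ℝ (Fin 4) → Matrix (Fin n) (Fin n) ℂ) :
    covD A x i (-f) = - covD A x i f := by
  have h : fderiv ℝ (-f) x (e4 i) = -(fderiv ℝ f x (e4 i)) :=
    congrArg (fun L => L (e4 i)) (fderiv_neg (𝕜 := ℝ) (f := f) (x := x))
  simp only [covD, h, Pi.neg_apply]
  noncomm_ring

/-- Instantons solve the Yang–Mills equation: if `A` is a twice continuously differentiable
anti-self-dual `u(n)`-connection on `ℝ⁴`, then `Σᵢ (∂ᵢF_{ij} + [A_i, F_{ij}]) = 0` for each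
`j` and every point `x`. -/
theorem instanton_solves_yangMills {n : ℕ}
    (A : Fin 4 → EuclideanSpace ℝ (Fin 4) → Matrix (Fin n) (Fin n) ℂ)
    (hA : ∀ μ, ContDiff ℝ 2 (A μ))
    (hskew : ∀ μ x, (A μ x)ᴴ = -(A μ x))
    (hASD : IsASD A) :
    ∀ (j : Fin 4) (x : EuclideanSpace ℝ (Fin 4)),
      ∑ i : Fin 4, (fderiv ℝ (fun x => curv A i j x) x (e4 i)
        + (A i x * curv A i j x - curv A i j x * A i x)) = 0 := by
  intro j x
  have B : ∀ i j k, covD A x i (curv A j k) + covD A x j (curv A k i)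
      + covD A x k (curv A i j) = 0 := fun i j k => bianchi A hA x i j k
  change ∑ i : Fin 4, covD A x i (curv A i j) = 0
  have h1 : curv A 0 1 = curv A 2 3 := funext fun y => (hASD y).1
  have h2 : curv A 0 2 = -curv A 1 3 := funext fun y => (hASD y).2.1
  have h3 : curv A 0 3 = curv A 1 2 := funext fun y => (hASD y).2.2
  have hd : ∀ i, covD A x i (curv A i i) = 0 := fun i => by
    have : curv A i i = 0 := by funext y; simp [curv]
    rw [this]
    simp [covD]
  have B0 := B 1 2 3
  have B1 := B 0 2 3
  have B2 := B 0 1 3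
  have B3 := B 0 1 2
  have a10 := curv_anti A 1 0
  have a20 := curv_anti A 2 0
  have a30 := curv_anti A 3 0
  have a21 := curv_anti A 2 1
  have a31 := curv_anti A 3 1
  have a32 := curv_anti A 3 2
  fin_cases j <;> simp only [Fin.sum_univ_four, Fin.zero_eta, Fin.mk_one, Fin.reduceFinMk, hd] <;>
    simp only [a10, a20, a30, a21, a31, a32, h1, h2, h3, covD_neg, neg_neg] at B0 B1 B2 B3 ⊢
  · refine neg_eq_zero.mp (Eq.trans ?_ B0); abel
  · refine Eq.trans ?_ B1; abel
  · refine neg_eq_zero.mp (Eq.trans ?_ B2); abel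
  · refine Eq.trans ?_ B3; abel
end

section
/- Anti-self-dual connections minimize the Yang–Mills functional in their topological class: let F_{ij} : ℝ⁴ → u(n) (1 ≤ i < j ≤ 4) be measurable maps such that x ↦ ‖F_{ij}(x)‖² is Lebesgue integrable for each pair (i,j). Then ∫_{ℝ⁴} Σ_{1≤i<j≤4} ‖F_{ij}(x)‖² dx ≥ −2 ∫_{ℝ⁴} Re tr(F₁₂F₃₄ − F₁₃F₂₄ + F₁₄F₂₃)(x) dx, with equality if and only if F₁₂ = F₃₄, F₁₃ = −F₂₄ and F₁₄ = F₂₃ almost everywhere. (When F is the curvature of a connection, the left side is the Yang–Mills action YM(A) = ‖F‖²_{L²} and the right side equals 8π² times the topological charge k = −(1/8π²)∫ tr(F ∧ F), so YM(A) ≥ 8π²k with equality exactly for instantons.) -/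
open Matrix MeasureTheory

/-- Matrices inherit the (entrywise) product measurable structure. -/
noncomputable instance {n : ℕ} : MeasurableSpace (Matrix (Fin n) (Fin n) ℂ) :=
  (inferInstance : MeasurableSpace (Fin n → Fin n → ℂ))

/-- The squared Frobenius norm `‖M‖² = Re tr(M·M†)`. -/
noncomputable def frobSq {n : ℕ} (M : Matrix (Fin n) (Fin n) ℂ) : ℝ :=
  (Matrix.trace (M * Mᴴ)).re

lemma frobSq_eq {n : ℕ} (M : Matrix (Fin n) (Fin n) ℂ) :
    frobSq M = ∑ i, ∑ j, Complex.normSq (M i j) := by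
  simp [frobSq, Matrix.trace, Matrix.mul_apply, Complex.mul_conj, ← Complex.ofReal_sum]

lemma frobSq_nonneg {n : ℕ} (M : Matrix (Fin n) (Fin n) ℂ) : 0 ≤ frobSq M := by
  rw [frobSq_eq]
  exact Finset.sum_nonneg fun i _ => Finset.sum_nonneg fun j _ => Complex.normSq_nonneg _

lemma frobSq_eq_zero {n : ℕ} (M : Matrix (Fin n) (Fin n) ℂ) (h : frobSq M = 0) : M = 0 := by
  rw [frobSq_eq] at h
  have h0 := (Finset.sum_eq_zero_iff_of_nonneg
    (fun i _ => Finset.sum_nonneg fun j _ => Complex.normSq_nonneg _)).1 h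
  ext i j
  have h1 := h0 i (Finset.mem_univ _)
  have h2 := (Finset.sum_eq_zero_iff_of_nonneg (fun j _ => Complex.normSq_nonneg _)).1 h1
  exact Complex.normSq_eq_zero.1 (h2 j (Finset.mem_univ _))

lemma frobSq_sub {n : ℕ} (A B : Matrix (Fin n) (Fin n) ℂ) (hA : Aᴴ = -A) (hB : Bᴴ = -B) :
    frobSq (A - B) = frobSq A + frobSq B + 2 * (Matrix.trace (A * B)).re := by
  have h := Matrix.trace_mul_comm B A
  simp only [frobSq, Matrix.conjTranspose_sub, hA, hB, mul_sub, sub_mul, mul_neg,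
    Matrix.trace_sub, Matrix.trace_neg, h, Complex.sub_re, Complex.neg_re]
  ring

lemma frobSq_add {n : ℕ} (A B : Matrix (Fin n) (Fin n) ℂ) (hA : Aᴴ = -A) (hB : Bᴴ = -B) :
    frobSq (A + B) = frobSq A + frobSq B - 2 * (Matrix.trace (A * B)).re := by
  have h := Matrix.trace_mul_comm B A
  simp only [frobSq, Matrix.conjTranspose_add, hA, hB, mul_add, add_mul, mul_neg,
    Matrix.trace_add, Matrix.trace_neg, h, Complex.add_re, Complex.neg_re]
  ring

lemma integrable_tr {n : ℕ} (A B : EuclideanSpace ℝ (Fin 4) → Matrix (Fin n) (Fin n) ℂ)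
    (hA : ∀ x, (A x)ᴴ = -(A x)) (hB : ∀ x, (B x)ᴴ = -(B x))
    (mA : Measurable A) (mB : Measurable B)
    (iA : Integrable (fun x => frobSq (A x))) (iB : Integrable (fun x => frobSq (B x))) :
    Integrable (fun x => (Matrix.trace (A x * B x)).re) := by
  have eA : ∀ i j, Measurable fun x => A x i j := fun i j =>
    (measurable_pi_apply j).comp ((measurable_pi_apply i).comp mA)
  have eB : ∀ i j, Measurable fun x => B x i j := fun i j =>
    (measurable_pi_apply j).comp ((measurable_pi_apply i).comp mB)
  refine Integrable.mono' (iA.add iB) ?_ ?_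
  · apply Measurable.aestronglyMeasurable
    apply Complex.measurable_re.comp
    simp only [Matrix.trace, Matrix.diag, Matrix.mul_apply]
    exact Finset.measurable_sum _ fun i _ => Finset.measurable_sum _ fun j _ =>
      (eA i j).mul (eB j i)
  · refine Filter.Eventually.of_forall fun x => ?_
    have h1 := frobSq_sub _ _ (hA x) (hB x)
    have h2 := frobSq_add _ _ (hA x) (hB x)
    have h3 := frobSq_nonneg (A x - B x)
    have h4 := frobSq_nonneg (A x + B x)
    have h5 := frobSq_nonneg (A x)
    have h6 := frobSq_nonneg (B x)
    simp only [Real.norm_eq_abs, Pi.add_apply]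
    rw [abs_le]
    constructor <;> linarith

/-- Anti-self-dual connections minimize the Yang–Mills functional in their topological class:
for measurable `u(n)`-valued `F_{ij}` on `ℝ⁴` with integrable `‖F_{ij}‖²`,
`∫ Σ_{i<j} ‖F_{ij}‖² ≥ −2 ∫ Re tr(F₁₂F₃₄ − F₁₃F₂₄ + F₁₄F₂₃)`, with equality iff the
anti-self-duality relations hold almost everywhere.  (When `F` is the curvature of a
connection, the left side is `YM(A) = ‖F‖²_{L²}` and the right side is `8π²k`.) -/
theorem yangMills_ge_topological_charge {n : ℕ}
    (F12 F13 F14 F23 F24 F34 : EuclideanSpace ℝ (Fin 4) → Matrix (Fin n) (Fin n) ℂ)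
    (hskew : ∀ x, (F12 x)ᴴ = -(F12 x) ∧ (F13 x)ᴴ = -(F13 x) ∧ (F14 x)ᴴ = -(F14 x)
      ∧ (F23 x)ᴴ = -(F23 x) ∧ (F24 x)ᴴ = -(F24 x) ∧ (F34 x)ᴴ = -(F34 x))
    (hmeas : Measurable F12 ∧ Measurable F13 ∧ Measurable F14
      ∧ Measurable F23 ∧ Measurable F24 ∧ Measurable F34)
    (hint : Integrable (fun x => frobSq (F12 x)) ∧ Integrable (fun x => frobSq (F13 x))
      ∧ Integrable (fun x => frobSq (F14 x)) ∧ Integrable (fun x => frobSq (F23 x))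
      ∧ Integrable (fun x => frobSq (F24 x)) ∧ Integrable (fun x => frobSq (F34 x))) :
    (∫ x, (frobSq (F12 x) + frobSq (F13 x) + frobSq (F14 x)
        + frobSq (F23 x) + frobSq (F24 x) + frobSq (F34 x))
      ≥ -2 * ∫ x, (Matrix.trace (F12 x * F34 x - F13 x * F24 x + F14 x * F23 x)).re)
    ∧ ((∫ x, (frobSq (F12 x) + frobSq (F13 x) + frobSq (F14 x)
        + frobSq (F23 x) + frobSq (F24 x) + frobSq (F34 x))
      = -2 * ∫ x, (Matrix.trace (F12 x * F34 x - F13 x * F24 x + F14 x * F23 x)).re)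
      ↔ (∀ᵐ x, F12 x = F34 x ∧ F13 x = -(F24 x) ∧ F14 x = F23 x)) := by
  obtain ⟨m12, m13, m14, m23, m24, m34⟩ := hmeas
  obtain ⟨i12, i13, i14, i23, i24, i34⟩ := hint
  have s12 := fun x => (hskew x).1
  have s13 := fun x => (hskew x).2.1
  have s14 := fun x => (hskew x).2.2.1
  have s23 := fun x => (hskew x).2.2.2.1
  have s24 := fun x => (hskew x).2.2.2.2.1
  have s34 := fun x => (hskew x).2.2.2.2.2
  have iS : Integrable (fun x => frobSq (F12 x) + frobSq (F13 x) + frobSq (F14 x)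
        + frobSq (F23 x) + frobSq (F24 x) + frobSq (F34 x)) :=
    ((((i12.add i13).add i14).add i23).add i24).add i34
  have iT : Integrable (fun x =>
      (Matrix.trace (F12 x * F34 x - F13 x * F24 x + F14 x * F23 x)).re) := by
    simp only [Matrix.trace_add, Matrix.trace_sub, Complex.add_re, Complex.sub_re]
    exact ((integrable_tr _ _ s12 s34 m12 m34 i12 i34).sub
      (integrable_tr _ _ s13 s24 m13 m24 i13 i24)).add
      (integrable_tr _ _ s14 s23 m14 m23 i14 i23)
  have key : ∀ x, (frobSq (F12 x) + frobSq (F13 x) + frobSq (F14 x)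
        + frobSq (F23 x) + frobSq (F24 x) + frobSq (F34 x))
      + 2 * (Matrix.trace (F12 x * F34 x - F13 x * F24 x + F14 x * F23 x)).re
      = frobSq (F12 x - F34 x) + frobSq (F13 x + F24 x) + frobSq (F14 x - F23 x) := by
    intro x
    rw [frobSq_sub _ _ (s12 x) (s34 x), frobSq_add _ _ (s13 x) (s24 x),
      frobSq_sub _ _ (s14 x) (s23 x)]
    simp only [Matrix.trace_add, Matrix.trace_sub, Complex.add_re, Complex.sub_re]
    ring
  have hI := integral_add iS (iT.const_mul 2)
  have iG := iS.add (iT.const_mul 2)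
  have iG' : Integrable (fun x => frobSq (F12 x - F34 x) + frobSq (F13 x + F24 x)
      + frobSq (F14 x - F23 x)) := iG.congr (Filter.Eventually.of_forall key)
  rw [integral_const_mul] at hI
  simp only [key] at hI
  have hnn : ∀ x, 0 ≤ frobSq (F12 x - F34 x) + frobSq (F13 x + F24 x)
      + frobSq (F14 x - F23 x) := fun x =>
    add_nonneg (add_nonneg (frobSq_nonneg _) (frobSq_nonneg _)) (frobSq_nonneg _)
  have h0 : 0 ≤ ∫ x, (frobSq (F12 x - F34 x) + frobSq (F13 x + F24 x)
      + frobSq (F14 x - F23 x)) := integral_nonneg (fun x => hnn x)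
  have hz := integral_eq_zero_iff_of_nonneg (fun x => hnn x) iG'
  refine ⟨by linarith, ?_⟩
  trans (∫ x, frobSq (F12 x - F34 x) + frobSq (F13 x + F24 x)
      + frobSq (F14 x - F23 x)) = 0
  · constructor <;> intro h <;> linarith
  rw [hz]
  apply Filter.eventually_congr
  refine Filter.Eventually.of_forall fun x => ?_
  constructor
  · intro h
    have h' : frobSq (F12 x - F34 x) + frobSq (F13 x + F24 x)
      + frobSq (F14 x - F23 x) = 0 := h
    have h3 := frobSq_nonneg (F12 x - F34 x)
    have h4 := frobSq_nonneg (F13 x + F24 x)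
    have h5 := frobSq_nonneg (F14 x - F23 x)
    exact ⟨sub_eq_zero.1 (frobSq_eq_zero _ (by linarith)),
      eq_neg_of_add_eq_zero_left (frobSq_eq_zero _ (by linarith)),
      sub_eq_zero.1 (frobSq_eq_zero _ (by linarith))⟩
  · rintro ⟨a, b, c⟩
    simp [a, b, c, frobSq]
end

section
/- Dimensional reduction to Hitchin's equations: let A₁, A₂, A₃, A₄ : ℝ² → u(n) be differentiable, regarded as an (x₃,x₄)-invariant connection on ℝ⁴, and set Φ := ½(A₃ + i·A₄) : ℝ² → Mₙ(ℂ). Then the anti-self-duality equations F₁₂ = F₃₄, F₁₃ = −F₂₄, F₁₄ = F₂₃ hold if and only if Hitchin's equations hold on ℝ²: F₁₂ = −2i·[Φ, Φ†] and (∂₁ − i·∂₂)Φ + [A₁ − i·A₂, Φ] = 0, where F₁₂ = ∂₁A₂ − ∂₂A₁ + [A₁, A₂] and † denotes the conjugate transpose. -/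
open Matrix

attribute [local instance] Matrix.frobeniusNormedAddCommGroup Matrix.frobeniusNormedSpace

/-- The standard basis vectors of `ℝ²`. -/
noncomputable def e2 (i : Fin 2) : EuclideanSpace ℝ (Fin 2) := EuclideanSpace.single i 1

/-- Projection `ℝ⁴ → ℝ²` onto the first two coordinates. -/
noncomputable def proj42 (x : EuclideanSpace ℝ (Fin 4)) : EuclideanSpace ℝ (Fin 2) :=
  WithLp.toLp 2 fun i => x (Fin.castLE (by norm_num) i)

/-- The `(x₃,x₄)`-invariant connection on `ℝ⁴` determined by components
`A₁,A₂,A₃,A₄` defined on `ℝ²`. -/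
noncomputable def extend24 {n : ℕ}
    (A : Fin 4 → EuclideanSpace ℝ (Fin 2) → Matrix (Fin n) (Fin n) ℂ) :
    Fin 4 → EuclideanSpace ℝ (Fin 4) → Matrix (Fin n) (Fin n) ℂ :=
  fun μ x => A μ (proj42 x)

/-- The Higgs field `Φ = ½(A₃ + i·A₄)` of the reduction to two dimensions. -/
noncomputable def higgsΦ {n : ℕ}
    (A : Fin 4 → EuclideanSpace ℝ (Fin 2) → Matrix (Fin n) (Fin n) ℂ)
    (x : EuclideanSpace ℝ (Fin 2)) : Matrix (Fin n) (Fin n) ℂ :=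
  (1 / 2 : ℂ) • (A 2 x + Complex.I • A 3 x)

/-- The projection as a continuous linear map. -/
noncomputable def proj42L : EuclideanSpace ℝ (Fin 4) →L[ℝ] EuclideanSpace ℝ (Fin 2) :=
  LinearMap.toContinuousLinearMap
    { toFun := proj42
      map_add' := by intro x y; ext i; simp [proj42]
      map_smul' := by intro c x; ext i; simp [proj42] }

theorem fderiv_extend {n : ℕ} (f : EuclideanSpace ℝ (Fin 2) → Matrix (Fin n) (Fin n) ℂ)
    (hf : Differentiable ℝ f) (x v : EuclideanSpace ℝ (Fin 4)) :
    fderiv ℝ (fun y => f (proj42 y)) x v = fderiv ℝ f (proj42 x) (proj42 v) := by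
  have h1 : HasFDerivAt f (fderiv ℝ f (proj42 x)) (proj42L x) := (hf _).hasFDerivAt
  have h2 := h1.comp x proj42L.hasFDerivAt
  have h3 : HasFDerivAt (fun y => f (proj42 y)) ((fderiv ℝ f (proj42 x)).comp proj42L) x := h2
  rw [h3.fderiv]
  rfl

theorem proj_e0 : proj42 (e4 0) = e2 0 := by
  ext i; fin_cases i <;> simp [proj42, e4, e2]
theorem proj_e1 : proj42 (e4 1) = e2 1 := by
  ext i; fin_cases i <;> simp [proj42, e4, e2]
theorem proj_e2 : proj42 (e4 2) = 0 := by
  ext i; fin_cases i <;> simp [proj42, e4]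
theorem proj_e3 : proj42 (e4 3) = 0 := by
  ext i; fin_cases i <;> simp [proj42, e4]

theorem proj_surj (x : EuclideanSpace ℝ (Fin 2)) : ∃ y, proj42 y = x := by
  refine ⟨WithLp.toLp 2 ![x 0, x 1, 0, 0], ?_⟩
  ext i; fin_cases i <;> simp [proj42]

/-- Conjugate transpose as a real continuous linear map. -/
noncomputable def ctL (n : ℕ) : Matrix (Fin n) (Fin n) ℂ →L[ℝ] Matrix (Fin n) (Fin n) ℂ :=
  LinearMap.toContinuousLinearMap
    { toFun := fun M => Mᴴ
      map_add' := by intro x y; simp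
      map_smul' := by intro c x; simp }

theorem fderiv_skew {n : ℕ} (f : EuclideanSpace ℝ (Fin 2) → Matrix (Fin n) (Fin n) ℂ)
    (hf : Differentiable ℝ f) (hs : ∀ x, (f x)ᴴ = -(f x)) (x v : EuclideanSpace ℝ (Fin 2)) :
    (fderiv ℝ f x v)ᴴ = -(fderiv ℝ f x v) := by
  have h2 := (ctL n).hasFDerivAt.comp x (hf x).hasFDerivAt
  have h4 : (ctL n : Matrix (Fin n) (Fin n) ℂ → Matrix (Fin n) (Fin n) ℂ) ∘ f = -f := by
    funext y; exact hs y
  rw [h4] at h2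
  have h5 := h2.unique (hf x).hasFDerivAt.neg
  exact congrArg (fun L => L v) h5

theorem fderiv_higgs {n : ℕ}
    (A : Fin 4 → EuclideanSpace ℝ (Fin 2) → Matrix (Fin n) (Fin n) ℂ)
    (hdiff : ∀ μ, Differentiable ℝ (A μ)) (x v : EuclideanSpace ℝ (Fin 2)) :
    fderiv ℝ (higgsΦ A) x v
      = (1 / 2 : ℂ) • (fderiv ℝ (A 2) x v + Complex.I • fderiv ℝ (A 3) x v) := by
  have h : HasFDerivAt (higgsΦ A)
      ((1 / 2 : ℂ) • (fderiv ℝ (A 2) x + Complex.I • fderiv ℝ (A 3) x)) x :=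
    ((hdiff 2 x).hasFDerivAt.add ((hdiff 3 x).hasFDerivAt.const_smul Complex.I)).const_smul
      (1 / 2 : ℂ)
  rw [h.fderiv]
  rfl

theorem skew_split {n : ℕ} (X Y : Matrix (Fin n) (Fin n) ℂ) (hX : Xᴴ = -X) (hY : Yᴴ = -Y)
    (h : X + Complex.I • Y = 0) : X = 0 ∧ Y = 0 := by
  have h2 : -X + Complex.I • Y = 0 := by
    have := congrArg conjTranspose h
    simpa [hX, hY] using this
  have hY2 : Complex.I • Y = 0 := by
    have h3 : (2 : ℂ) • (Complex.I • Y) = (X + Complex.I • Y) + (-X + Complex.I • Y) := by module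
    rw [h, h2, add_zero] at h3
    exact (smul_eq_zero.mp h3).resolve_left two_ne_zero
  refine ⟨by simpa [hY2] using h, (smul_eq_zero.mp hY2).resolve_left Complex.I_ne_zero⟩

theorem skew_comm {n : ℕ} (X Y : Matrix (Fin n) (Fin n) ℂ) (hX : Xᴴ = -X) (hY : Yᴴ = -Y) :
    (X * Y - Y * X)ᴴ = -(X * Y - Y * X) := by
  simp [hX, hY]

theorem higgs_comm {n : ℕ} (a b : Matrix (Fin n) (Fin n) ℂ) (ha : aᴴ = -a) (hb : bᴴ = -b) :
    (-(2 * Complex.I)) • (((1 / 2 : ℂ) • (a + Complex.I • b)) * ((1 / 2 : ℂ) • (a + Complex.I • b))ᴴ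
      - ((1 / 2 : ℂ) • (a + Complex.I • b))ᴴ * ((1 / 2 : ℂ) • (a + Complex.I • b)))
      = a * b - b * a := by
  have h : ((1 / 2 : ℂ) • (a + Complex.I • b))ᴴ = (1 / 2 : ℂ) • (-a + Complex.I • b) := by
    simp [ha, hb]
  rw [h]
  simp only [smul_mul_assoc, mul_smul_comm, add_mul, mul_add, neg_mul, mul_neg, smul_add,
    smul_sub, smul_neg, smul_smul]
  have hI : Complex.I * Complex.I = -1 := Complex.I_mul_I
  match_scalars <;> first | ring1 | linear_combination (-1 : ℂ) * hI | linear_combination hI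

theorem higgs_eq {n : ℕ} (p q a b a0 a1 b0 b1 : Matrix (Fin n) (Fin n) ℂ) :
    (1 / 2 : ℂ) • (a0 + Complex.I • b0) - Complex.I • ((1 / 2 : ℂ) • (a1 + Complex.I • b1))
      + ((p - Complex.I • q) * ((1 / 2 : ℂ) • (a + Complex.I • b))
        - ((1 / 2 : ℂ) • (a + Complex.I • b)) * (p - Complex.I • q))
    = (1 / 2 : ℂ) • (((a0 + (p * a - a * p)) + (b1 + (q * b - b * q)))
        + Complex.I • ((b0 + (p * b - b * p)) - (a1 + (q * a - a * q)))) := by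
  have hI : Complex.I * Complex.I = -1 := Complex.I_mul_I
  simp only [smul_mul_assoc, mul_smul_comm, add_mul, mul_add, sub_mul, mul_sub, smul_add,
    smul_sub, smul_smul]
  match_scalars <;> first | ring1 | linear_combination (1 / 2 : ℂ) * hI | linear_combination (-1 / 2 : ℂ) * hI

/-- Dimensional reduction to Hitchin's equations: an `(x₃,x₄)`-invariant `u(n)`-connection on
`ℝ⁴` is anti-self-dual iff Hitchin's equations `F₁₂ = −2i·[Φ,Φ†]` and
`(∂₁ − i∂₂)Φ + [A₁ − iA₂, Φ] = 0` hold on `ℝ²`, where `Φ = ½(A₃ + iA₄)`. -/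
theorem asd_iff_hitchin {n : ℕ}
    (A : Fin 4 → EuclideanSpace ℝ (Fin 2) → Matrix (Fin n) (Fin n) ℂ)
    (hdiff : ∀ μ, Differentiable ℝ (A μ))
    (hskew : ∀ μ x, (A μ x)ᴴ = -(A μ x)) :
    IsASD (extend24 A) ↔
      ∀ x : EuclideanSpace ℝ (Fin 2),
        (fderiv ℝ (A 1) x (e2 0) - fderiv ℝ (A 0) x (e2 1)
            + (A 0 x * A 1 x - A 1 x * A 0 x)
          = (-(2 * Complex.I)) •
              (higgsΦ A x * (higgsΦ A x)ᴴ - (higgsΦ A x)ᴴ * higgsΦ A x))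
        ∧ (fderiv ℝ (higgsΦ A) x (e2 0) - Complex.I • fderiv ℝ (higgsΦ A) x (e2 1)
            + ((A 0 x - Complex.I • A 1 x) * higgsΦ A x
              - higgsΦ A x * (A 0 x - Complex.I • A 1 x)) = 0) := by
  have key : IsASD (extend24 A) ↔ ∀ x : EuclideanSpace ℝ (Fin 2),
      (fderiv ℝ (A 1) x (e2 0) - fderiv ℝ (A 0) x (e2 1) + (A 0 x * A 1 x - A 1 x * A 0 x)
        = A 2 x * A 3 x - A 3 x * A 2 x)
      ∧ (fderiv ℝ (A 2) x (e2 0) + (A 0 x * A 2 x - A 2 x * A 0 x)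
        = -(fderiv ℝ (A 3) x (e2 1) + (A 1 x * A 3 x - A 3 x * A 1 x)))
      ∧ (fderiv ℝ (A 3) x (e2 0) + (A 0 x * A 3 x - A 3 x * A 0 x)
        = fderiv ℝ (A 2) x (e2 1) + (A 1 x * A 2 x - A 2 x * A 1 x)) := by
    have hp : Function.Surjective proj42 := proj_surj
    rw [hp.forall]
    unfold IsASD curv extend24
    simp only [fderiv_extend _ (hdiff _), proj_e0, proj_e1, proj_e2, proj_e3, map_zero,
      sub_zero, zero_add]
  rw [key]
  refine forall_congr' fun x => and_congr ?_ ?_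
  · unfold higgsΦ
    rw [higgs_comm _ _ (hskew 2 x) (hskew 3 x)]
  · rw [fderiv_higgs A hdiff, fderiv_higgs A hdiff]
    unfold higgsΦ
    rw [higgs_eq]
    have hd := fun μ v => fderiv_skew (A μ) (hdiff μ) (hskew μ) x v
    have hc := fun μ ν => skew_comm (A μ x) (A ν x) (hskew μ x) (hskew ν x)
    constructor
    · rintro ⟨h1, h2⟩
      rw [h1, h2]
      simp
    · intro h
      have h' := (smul_eq_zero.mp h).resolve_left (by norm_num)
      obtain ⟨h1, h2⟩ := skew_split _ _
        (by rw [conjTranspose_add, conjTranspose_add, conjTranspose_add, hd, hd, hc, hc]; abel)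
        (by rw [conjTranspose_sub, conjTranspose_add, conjTranspose_add, hd, hd, hc, hc]; abel) h'
      exact ⟨eq_neg_of_add_eq_zero_left h1, sub_eq_zero.mp h2⟩
end
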